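/- Ultrafilter limits with respect to d_max commute with the Gödel implication: let V ⊆ [0,1] be closed with 0, 1 ∈ V, closed under the operation ⊸, and with all accumulation points of V contained in {0}; let 𝒟 be an ultrafilter on an index set I, let x, y : I → V be families, and let a, b ∈ V be the 𝒟-limits of (x_i) and (y_i) respectively in the metric space (V, d_max). Then a ⊸ b is the 𝒟-limit of the family (x_i ⊸ y_i) in (V, d_max). -/

import Mathlib

open Set Filter

/-- `d_max(x,y) = 0` if `x = y`, and `max x y` otherwise. -/
noncomputable def dmax (x y : ℝ) : ℝ := if x = y then 0 else max x y

/-- Gödel implication in the reversed semantics: `x ⊸ y = 0` if `x ≥ y`, else `y`. -/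
noncomputable def gimp (x y : ℝ) : ℝ := if y ≤ x then 0 else y

/-- `v` is the `𝒟`-limit of the family `x` with respect to the metric `d_max`. -/
def DLim {I : Type*} (𝒟 : Ultrafilter I) (x : I → ℝ) (v : ℝ) : Prop :=
  ∀ ε : ℝ, 0 < ε → {i | dmax (x i) v < ε} ∈ 𝒟

/-!
At a positive point `v` the metric `d_max` is discrete: `d_max(x, v) < ε ≤ v` forces `x = v`. At
`v ≤ 0` closeness to `v` is just the one-sided bound `x < ε`. So if `b > 0`, the values `y i` are
eventually equal to `b`, the comparison of `x i` with `b` eventually agrees with that of `a` with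
`b`, and the implications are eventually constant. If `b ≤ 0`, then `a ⊸ b ≤ 0` and the upper bound
`x i ⊸ y i ≤ max 0 (y i)` suffices.
-/

theorem gimp_of_le {x y : ℝ} (h : y ≤ x) : gimp x y = 0 := if_pos h

theorem gimp_of_lt {x y : ℝ} (h : x < y) : gimp x y = y := if_neg h.not_ge

theorem gimp_le_max_zero (x y : ℝ) : gimp x y ≤ max 0 y := by
  rcases le_or_gt y x with h | h
  · exact (gimp_of_le h).trans_le (le_max_left 0 y)
  · exact (gimp_of_lt h).trans_le (le_max_right 0 y)

theorem dmax_self (v : ℝ) : dmax v v = 0 := if_pos rfl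

theorem dmax_of_ne {x v : ℝ} (h : x ≠ v) : dmax x v = max x v := if_neg h

theorem eq_of_dmax_lt {x v : ℝ} (h : dmax x v < v) : x = v := by
  by_contra hne
  rw [dmax_of_ne hne] at h
  exact (le_max_right x v).not_gt h

theorem dmax_lt_iff_of_nonpos {x v ε : ℝ} (hv : v ≤ 0) (hε : 0 < ε) : dmax x v < ε ↔ x < ε := by
  have hvε : v < ε := hv.trans_lt hε
  rcases eq_or_ne x v with rfl | hne
  · simp only [dmax_self, hε, hvε]
  · simp only [dmax_of_ne hne, max_lt_iff, hvε, and_true]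

/-- Convergence of the family `x` to `v` along an arbitrary filter, measured by `dmax`. For an
ultrafilter `𝒟` this unfolds to `DLim 𝒟 x v`. -/
def DMaxTendsto {I : Type*} (x : I → ℝ) (l : Filter I) (v : ℝ) : Prop :=
  ∀ ε : ℝ, 0 < ε → ∀ᶠ i in l, dmax (x i) v < ε

section DMaxTendsto

variable {I : Type*} {l : Filter I} {x y : I → ℝ} {a b v : ℝ}

theorem dMaxTendsto_of_eventually_eq (h : ∀ᶠ i in l, x i = v) : DMaxTendsto x l v := by
  intro ε hε
  filter_upwards [h] with i hi
  rwa [hi, dmax_self]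

theorem dMaxTendsto_iff_of_nonpos (hv : v ≤ 0) :
    DMaxTendsto x l v ↔ ∀ ε : ℝ, 0 < ε → ∀ᶠ i in l, x i < ε :=
  forall₂_congr fun _ hε => eventually_congr <| .of_forall fun _ => dmax_lt_iff_of_nonpos hv hε

theorem DMaxTendsto.eventually_eq (h : DMaxTendsto x l v) (hv : 0 < v) : ∀ᶠ i in l, x i = v :=
  (h v hv).mono fun _ => eq_of_dmax_lt

theorem DMaxTendsto.eventually_lt {c : ℝ} (h : DMaxTendsto x l v) (hc : 0 < c) (hvc : v < c) :
    ∀ᶠ i in l, x i < c := by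
  rcases le_or_gt v 0 with hv | hv
  · exact (dMaxTendsto_iff_of_nonpos hv).1 h c hc
  · exact (h.eventually_eq hv).mono fun _ hi => hi.trans_lt hvc

theorem DMaxTendsto.eventually_gimp_eq (hx : DMaxTendsto x l a) (hy : DMaxTendsto y l b)
    (hb : 0 < b) : ∀ᶠ i in l, gimp (x i) (y i) = gimp a b := by
  rcases lt_or_ge a b with hab | hba
  · filter_upwards [hx.eventually_lt hb hab, hy.eventually_eq hb] with i hxi hyi
    rw [hyi, gimp_of_lt hxi, gimp_of_lt hab]
  · filter_upwards [hx.eventually_eq (hb.trans_le hba), hy.eventually_eq hb] with i hxi hyi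
    rw [hxi, hyi]

theorem DMaxTendsto.gimp_of_nonpos (hy : DMaxTendsto y l b) (hb : b ≤ 0) :
    DMaxTendsto (fun i => gimp (x i) (y i)) l (gimp a b) := by
  have hab : gimp a b ≤ 0 := (gimp_le_max_zero a b).trans_eq (max_eq_left hb)
  refine (dMaxTendsto_iff_of_nonpos hab).2 fun ε hε => ?_
  filter_upwards [hy.eventually_lt hε (hb.trans_lt hε)] with i hyi
  exact (gimp_le_max_zero (x i) (y i)).trans_lt (max_lt hε hyi)

theorem dlim_gimp_general (hx : DMaxTendsto x l a) (hy : DMaxTendsto y l b) :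
    DMaxTendsto (fun i => gimp (x i) (y i)) l (gimp a b) := by
  rcases le_or_gt b 0 with hb | hb
  · exact hy.gimp_of_nonpos hb
  · exact dMaxTendsto_of_eventually_eq (hx.eventually_gimp_eq hy hb)

end DMaxTendsto

/-- Ultrafilter limits with respect to `d_max` commute with the Gödel
implication on a Gödel set `V` whose accumulation points lie in `{0}` and
which is closed under `⊸`. -/
theorem dlim_gimp {I : Type*} (V : Set ℝ) (hV : V ⊆ Icc 0 1)
    (hcl : IsClosed V) (h0 : (0:ℝ) ∈ V) (h1 : (1:ℝ) ∈ V)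
    (hop : ∀ a ∈ V, ∀ b ∈ V, gimp a b ∈ V)
    (hacc : ∀ x : ℝ, AccPt x (𝓟 V) → x = 0)
    (𝒟 : Ultrafilter I) (x y : I → ℝ)
    (hx : ∀ i, x i ∈ V) (hy : ∀ i, y i ∈ V)
    (a b : ℝ) (ha : a ∈ V) (hb : b ∈ V)
    (hxa : DLim 𝒟 x a) (hyb : DLim 𝒟 y b) :
    DLim 𝒟 (fun i => gimp (x i) (y i)) (gimp a b) :=
  dlim_gimp_general hxa hyb
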